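/- For all complex numbers q and x with |q| < 1 and 0 < |x| < 1: Σ_{n=1}^∞ Σ_{c=0}^n (x;q)_n x^{n−1} q^{c²} x^{2c} [n choose c]_q = (qx;q)_∞ · Σ_{c=0}^∞ q^{c²} x^{3c−1} / (qx;q)_c − (1−x)·x^{−1}·(qx;q)_∞ + (1−x) · Σ_{n=1}^∞ Σ_{c=0}^n ((qx;q)_{n−1} − (qx;q)_∞) · x^{n−1} · q^{c²} · x^{2c} · [n choose c]_q, all series converging absolutely. -/

import Mathlib

/-!
Write `(x;q)_{n+1} = (1 - x) (qx;q)_n` and split `(qx;q)_n` into its limit `(qx;q)_∞` and the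
deviation from it. The deviation gives the last series of the identity. The limit multiplies a
double series without Pochhammer factor, which is summed over `n` first, using the generating
function `∑ₙ xⁿ [n choose c]_q = x^c / (x;q)_{c+1}`. The series starts at `n = 1`, and removing the
term `n = 0` is what produces the correction `(1 - x) x⁻¹ (qx;q)_∞`.
-/

/-- The finite q-Pochhammer symbol `(x;q)_n = ∏_{i=1}^n (1 - x q^{i-1})`. -/
noncomputable def qPoch (q x : ℂ) (n : ℕ) : ℂ := ∏ i ∈ Finset.range n, (1 - x * q ^ i)

/-- The infinite q-Pochhammer symbol `(x;q)_∞ = ∏_{i=1}^∞ (1 - x q^{i-1})`. -/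
noncomputable def qPochInf (q x : ℂ) : ℂ := ∏' i : ℕ, (1 - x * q ^ i)

/-- The Gaussian binomial coefficient `[n choose c]_q`. -/
noncomputable def qBinom (q : ℂ) (n c : ℕ) : ℂ :=
  if c ≤ n then qPoch q q n / (qPoch q q c * qPoch q q (n - c)) else 0

open Filter Topology

lemma tsum_mul_eq_tsum_mul_limit_add {ι R : Type*} [NormedRing R] [NormMulClass R]
    [NormOneClass R] [CompleteSpace R] {f g : ι → R} {L : R} (hf : Summable fun i ↦ ‖f i‖)
    (hg : Tendsto g cofinite (𝓝 L)) :
    ∑' i, f i * g i = (∑' i, f i) * L + ∑' i, f i * (g i - L) := by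
  rw [← hf.of_norm.tsum_mul_right, ← (hf.of_norm.mul_right L).tsum_add
    (hf.mul_tendsto_const (hg.sub_const L))]
  exact tsum_congr fun i ↦ by rw [← mul_add, add_sub_cancel]

lemma zpow_three_mul_sub_one {G₀ : Type*} [GroupWithZero G₀] {a : G₀} (ha : a ≠ 0) (n : ℕ) :
    a ^ (3 * (n : ℤ) - 1) = a ^ (2 * n) * a ^ n * a⁻¹ := by
  rw [zpow_sub_one₀ ha, ← pow_add, ← zpow_natCast a (2 * n + n)]
  congr 2
  push_cast
  ring

section QPochhammer

variable {q x : ℂ} {n : ℕ}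

@[simp]
lemma qPoch_zero (q x : ℂ) : qPoch q x 0 = 1 := Finset.prod_range_zero _

lemma qPoch_succ (q x : ℂ) (n : ℕ) : qPoch q x (n + 1) = qPoch q x n * (1 - x * q ^ n) :=
  Finset.prod_range_succ _ _

lemma qPoch_succ' (q x : ℂ) (n : ℕ) : qPoch q x (n + 1) = (1 - x) * qPoch q (q * x) n := by
  rw [qPoch, Finset.prod_range_succ', pow_zero, mul_one, mul_comm]
  exact congrArg _ (Finset.prod_congr rfl fun i _ ↦ by ring)

lemma qPoch_ne_zero_iff : qPoch q x n ≠ 0 ↔ ∀ i < n, 1 - x * q ^ i ≠ 0 := by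
  simp only [qPoch, Finset.prod_ne_zero_iff, Finset.mem_range]

lemma one_sub_mul_pow_ne_zero (hq : ‖q‖ ≤ 1) (hx : ‖x‖ < 1) (n : ℕ) : 1 - x * q ^ n ≠ 0 := by
  have hlt : ‖x * q ^ n‖ < 1 := by
    rw [norm_mul, norm_pow]
    exact mul_lt_one_of_nonneg_of_lt_one_left (norm_nonneg x) hx (pow_le_one₀ (norm_nonneg q) hq)
  refine sub_ne_zero.mpr fun h ↦ ?_
  rw [← h, norm_one] at hlt
  exact lt_irrefl 1 hlt

lemma qPoch_ne_zero (hq : ‖q‖ ≤ 1) (hx : ‖x‖ < 1) (n : ℕ) : qPoch q x n ≠ 0 :=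
  qPoch_ne_zero_iff.mpr fun i _ ↦ one_sub_mul_pow_ne_zero hq hx i

lemma summable_norm_neg_mul_pow (hq : ‖q‖ < 1) (x : ℂ) :
    Summable fun i : ℕ ↦ ‖-(x * q ^ i)‖ := by
  simp only [norm_neg, norm_mul, norm_pow]
  exact (summable_geometric_of_lt_one (norm_nonneg q) hq).mul_left _

lemma tendsto_qPoch (hq : ‖q‖ < 1) (x : ℂ) :
    Tendsto (qPoch q x) atTop (𝓝 (qPochInf q x)) := by
  have h := multipliable_one_add_of_summable (summable_norm_neg_mul_pow hq x)
  simp only [← sub_eq_add_neg] at h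
  exact h.hasProd.tendsto_prod_nat

lemma qPochInf_ne_zero (hq : ‖q‖ < 1) (hx : ∀ i : ℕ, 1 - x * q ^ i ≠ 0) :
    qPochInf q x ≠ 0 := by
  simp only [sub_eq_add_neg] at hx
  simpa only [qPochInf, sub_eq_add_neg] using
    tprod_one_add_ne_zero_of_summable hx (summable_norm_neg_mul_pow hq x)

end QPochhammer

section QBinomial

variable {q x : ℂ} {n c : ℕ}

lemma qBinom_eq_zero_of_lt (q : ℂ) (h : n < c) : qBinom q n c = 0 := if_neg h.not_ge

lemma qBinom_zero_right (h : qPoch q q n ≠ 0) : qBinom q n 0 = 1 := by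
  simp [qBinom, h]

lemma qBinom_self (h : qPoch q q n ≠ 0) : qBinom q n n = 1 := by
  simp [qBinom, h]

lemma qBinom_succ_succ (h : qPoch q q (n + 1) ≠ 0) (c : ℕ) :
    qBinom q (n + 1) (c + 1) = qBinom q n c + q ^ (c + 1) * qBinom q n (c + 1) := by
  have hfactor := qPoch_ne_zero_iff.mp h
  have hpoch : ∀ m ≤ n, qPoch q q m ≠ 0 := fun m hm ↦
    qPoch_ne_zero_iff.mpr fun i hi ↦ hfactor i (by omega)
  rcases lt_trichotomy n c with hlt | rfl | hlt
  · rw [qBinom_eq_zero_of_lt q hlt, qBinom_eq_zero_of_lt q (by omega),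
      qBinom_eq_zero_of_lt q (by omega), mul_zero, add_zero]
  · rw [qBinom_eq_zero_of_lt q n.lt_succ_self, qBinom_self h, qBinom_self (hpoch n le_rfl),
      mul_zero, add_zero]
  · obtain ⟨k, rfl⟩ := Nat.exists_eq_add_of_lt hlt
    have hc := hpoch c (by omega)
    have hk := hpoch k (by omega)
    have hc' := hfactor c (by omega)
    have hk' := hfactor k (by omega)
    rw [qBinom, qBinom, qBinom, if_pos (by omega), if_pos (by omega), if_pos (by omega),
      show c + k + 1 + 1 - (c + 1) = k + 1 by omega, show c + k + 1 - c = k + 1 by omega,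
      show c + k + 1 - (c + 1) = k by omega, qPoch_succ q q (c + k + 1), qPoch_succ q q c,
      qPoch_succ q q k]
    field_simp
    ring

lemma exists_norm_qBinom_le (hq : ‖q‖ < 1) : ∃ M, ∀ n c, ‖qBinom q n c‖ ≤ M := by
  have hlim := tendsto_qPoch hq q
  have hlim_ne := qPochInf_ne_zero hq (one_sub_mul_pow_ne_zero hq.le hq)
  obtain ⟨A, hA⟩ := hlim.norm.bddAbove_range
  obtain ⟨B, hB⟩ := (hlim.inv₀ hlim_ne).norm.bddAbove_range
  rw [mem_upperBounds, Set.forall_mem_range] at hA hB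
  have hA0 : 0 ≤ A := (norm_nonneg _).trans (hA 0)
  have hB0 : 0 ≤ B := (norm_nonneg _).trans (hB 0)
  refine ⟨A * (B * B), fun n c ↦ ?_⟩
  unfold qBinom
  split_ifs
  · rw [div_eq_mul_inv, mul_inv, norm_mul, norm_mul]
    gcongr
    exacts [hA _, hB _, hB _]
  · rw [norm_zero]
    positivity

lemma summable_pow_mul_qBinom (hq : ‖q‖ < 1) (hx : ‖x‖ < 1) (c : ℕ) :
    Summable fun n ↦ x ^ n * qBinom q n c := by
  obtain ⟨M, hM⟩ := exists_norm_qBinom_le hq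
  refine .of_norm_bounded ((summable_geometric_of_lt_one (norm_nonneg x) hx).mul_right M)
    fun n ↦ ?_
  rw [norm_mul, norm_pow]
  gcongr
  exact hM n c

lemma tsum_pow_mul_qBinom_succ (hq : ‖q‖ < 1) (hx : ‖x‖ < 1) (c : ℕ) :
    (1 - x * q ^ (c + 1)) * ∑' n, x ^ n * qBinom q n (c + 1) =
      x * ∑' n, x ^ n * qBinom q n c := by
  have hs := summable_pow_mul_qBinom hq hx
  have hpascal : ∀ n, x ^ (n + 1) * qBinom q (n + 1) (c + 1) =
      x * (x ^ n * qBinom q n c) + x * q ^ (c + 1) * (x ^ n * qBinom q n (c + 1)) := fun n ↦ by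
    rw [qBinom_succ_succ (qPoch_ne_zero hq.le hq _)]
    ring
  have hshift := (hs (c + 1)).tsum_eq_zero_add
  simp only [hpascal] at hshift
  rw [qBinom_eq_zero_of_lt q c.succ_pos, mul_zero, zero_add,
    ((hs c).mul_left x).tsum_add ((hs (c + 1)).mul_left _), tsum_mul_left, tsum_mul_left] at hshift
  linear_combination hshift

lemma tsum_pow_mul_qBinom (hq : ‖q‖ < 1) (hx : ‖x‖ < 1) (c : ℕ) :
    ∑' n, x ^ n * qBinom q n c = x ^ c / qPoch q x (c + 1) := by
  induction c with
  | zero =>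
    simp only [qBinom_zero_right (qPoch_ne_zero hq.le hq _), mul_one,
      tsum_geometric_of_norm_lt_one hx, qPoch_succ, qPoch_zero, pow_zero, one_mul, one_div]
  | succ c ih =>
    have hfactor := one_sub_mul_pow_ne_zero hq.le hx (c + 1)
    have hpoch := qPoch_ne_zero hq.le hx (c + 1)
    rw [← mul_right_inj' hfactor, tsum_pow_mul_qBinom_succ hq hx, ih, qPoch_succ q x (c + 1)]
    field_simp
    ring

end QBinomial

/-- The `q`-binomial transform `n ↦ ∑_{c ≤ n} w_c [n choose c]_q` of a sequence of weights `w`.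
The polynomials in the theorem are the case `w_c = q^{c²} x^{2c}`. -/
noncomputable def qBinomTransform (q : ℂ) (w : ℕ → ℂ) (n : ℕ) : ℂ :=
  ∑ c ∈ Finset.range (n + 1), w c * qBinom q n c

section QBinomTransform

variable {q x : ℂ} {w : ℕ → ℂ}

lemma hasSum_mul_qBinom (q : ℂ) (w : ℕ → ℂ) (n : ℕ) :
    HasSum (fun c ↦ w c * qBinom q n c) (qBinomTransform q w n) :=
  hasSum_sum_of_ne_finset_zero fun c hc ↦ by
    rw [qBinom_eq_zero_of_lt q (by simpa using hc), mul_zero]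

@[simp]
lemma qBinomTransform_zero (q : ℂ) (w : ℕ → ℂ) : qBinomTransform q w 0 = w 0 := by
  simp [qBinomTransform, qBinom]

lemma summable_pow_mul_mul_qBinom (hq : ‖q‖ < 1) (hx : ‖x‖ < 1) (hw : Summable w) :
    Summable fun p : ℕ × ℕ ↦ x ^ p.1 * (w p.2 * qBinom q p.1 p.2) := by
  obtain ⟨M, hM⟩ := exists_norm_qBinom_le hq
  have hgeom : Summable fun n ↦ ‖x ^ n‖ := (summable_geometric_of_norm_lt_one hx).norm
  refine .of_norm_bounded ((hgeom.mul_norm hw.norm).mul_right M) fun p ↦ ?_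
  rw [← mul_assoc, norm_mul]
  gcongr
  exact hM p.1 p.2

lemma hasSum_pow_mul_qBinomTransform (hq : ‖q‖ < 1) (hx : ‖x‖ < 1) (hw : Summable w) :
    HasSum (fun n ↦ x ^ n * qBinomTransform q w n)
      (∑' p : ℕ × ℕ, x ^ p.1 * (w p.2 * qBinom q p.1 p.2)) :=
  (summable_pow_mul_mul_qBinom hq hx hw).hasSum.prod_fiberwise fun n ↦
    (hasSum_mul_qBinom q w n).mul_left (x ^ n)

lemma hasSum_mul_pow_div_qPoch (hq : ‖q‖ < 1) (hx : ‖x‖ < 1) (hw : Summable w) :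
    HasSum (fun c ↦ w c * (x ^ c / qPoch q x (c + 1)))
      (∑' p : ℕ × ℕ, x ^ p.1 * (w p.2 * qBinom q p.1 p.2)) := by
  rw [← (Equiv.prodComm ℕ ℕ).tsum_eq]
  refine (summable_pow_mul_mul_qBinom hq hx hw).prod_symm.hasSum.prod_fiberwise fun c ↦ ?_
  rw [← tsum_pow_mul_qBinom hq hx]
  simpa only [Prod.swap_prod_mk, mul_left_comm (w c)] using
    (summable_pow_mul_qBinom hq hx c).hasSum.mul_left (w c)

lemma hasSum_pow_mul_qBinomTransform_succ (hq : ‖q‖ < 1) (hx0 : x ≠ 0) (hx : ‖x‖ < 1)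
    (hw : Summable w) :
    HasSum (fun n ↦ x ^ n * qBinomTransform q w (n + 1))
      (x⁻¹ * (∑' c, w c * (x ^ c / qPoch q x (c + 1)) - w 0)) := by
  have h := hasSum_pow_mul_qBinomTransform hq hx hw
  rw [← (hasSum_mul_pow_div_qPoch hq hx hw).tsum_eq, ← hasSum_nat_add_iff' 1] at h
  simpa [pow_succ', mul_assoc, hx0] using h.mul_left x⁻¹

theorem tsum_pow_mul_qBinomTransform_succ_mul_qPoch (hq : ‖q‖ < 1) (hx0 : x ≠ 0) (hx : ‖x‖ < 1)
    (hw : Summable w) :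
    ∑' n, x ^ n * qBinomTransform q w (n + 1) * qPoch q (q * x) n =
      x⁻¹ * (∑' c, w c * (x ^ c / qPoch q x (c + 1)) - w 0) * qPochInf q (q * x) +
        ∑' n, x ^ n * qBinomTransform q w (n + 1) * (qPoch q (q * x) n - qPochInf q (q * x)) := by
  have hu := hasSum_pow_mul_qBinomTransform_succ hq hx0 hx hw
  rw [tsum_mul_eq_tsum_mul_limit_add hu.summable.norm
    (Nat.cofinite_eq_atTop ▸ tendsto_qPoch hq (q * x)), hu.tsum_eq]

end QBinomTransform

lemma summable_pow_sq_mul_pow_two_mul {q x : ℂ} (hq : ‖q‖ ≤ 1) (hx : ‖x‖ < 1) :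
    Summable fun c : ℕ ↦ q ^ c ^ 2 * x ^ (2 * c) := by
  have hx2 : ‖x ^ 2‖ < 1 := by
    rw [norm_pow]
    exact pow_lt_one₀ (norm_nonneg x) hx two_ne_zero
  refine .of_norm_bounded (summable_geometric_of_norm_lt_one hx2).norm fun c ↦ ?_
  rw [norm_mul, norm_pow, pow_mul]
  exact mul_le_of_le_one_left (norm_nonneg _) (pow_le_one₀ (norm_nonneg q) hq)

theorem stmt_4 (q x : ℂ) (hq : ‖q‖ < 1) (hx0 : 0 < ‖x‖) (hx : ‖x‖ < 1) :
    Summable (fun n : ℕ => ∑ c ∈ Finset.range (n + 2),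
      qPoch q x (n + 1) * x ^ n * q ^ (c ^ 2) * x ^ (2 * c) * qBinom q (n + 1) c) ∧
    Summable (fun c : ℕ => q ^ (c ^ 2) * x ^ (3 * (c : ℤ) - 1) / qPoch q (q * x) c) ∧
    Summable (fun n : ℕ => ∑ c ∈ Finset.range (n + 2),
      (qPoch q (q * x) n - qPochInf q (q * x)) * x ^ n * q ^ (c ^ 2) * x ^ (2 * c) *
        qBinom q (n + 1) c) ∧
    ∑' n : ℕ, ∑ c ∈ Finset.range (n + 2),
        qPoch q x (n + 1) * x ^ n * q ^ (c ^ 2) * x ^ (2 * c) * qBinom q (n + 1) c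
      = qPochInf q (q * x) * ∑' c : ℕ, q ^ (c ^ 2) * x ^ (3 * (c : ℤ) - 1) / qPoch q (q * x) c
        - (1 - x) * x⁻¹ * qPochInf q (q * x)
        + (1 - x) * ∑' n : ℕ, ∑ c ∈ Finset.range (n + 2),
            (qPoch q (q * x) n - qPochInf q (q * x)) * x ^ n * q ^ (c ^ 2) * x ^ (2 * c) *
              qBinom q (n + 1) c := by
  have hxne : x ≠ 0 := norm_pos_iff.mp hx0
  set w : ℕ → ℂ := fun c ↦ q ^ c ^ 2 * x ^ (2 * c) with hw_def
  have hw : Summable w := summable_pow_sq_mul_pow_two_mul hq.le hx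
  have hlim : Tendsto (qPoch q (q * x)) cofinite (𝓝 (qPochInf q (q * x))) :=
    Nat.cofinite_eq_atTop ▸ tendsto_qPoch hq (q * x)
  have hu := (hasSum_pow_mul_qBinomTransform_succ hq hxne hx hw).summable.norm
  have hrow : ∀ (a : ℂ) (n : ℕ), ∑ c ∈ Finset.range (n + 2),
      a * x ^ n * q ^ c ^ 2 * x ^ (2 * c) * qBinom q (n + 1) c =
        x ^ n * qBinomTransform q w (n + 1) * a := fun a n ↦ by
    simp only [qBinomTransform, hw_def, Finset.mul_sum, Finset.sum_mul]
    exact Finset.sum_congr rfl fun c _ ↦ by ring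
  have hcol : ∀ c : ℕ, q ^ c ^ 2 * x ^ (3 * (c : ℤ) - 1) / qPoch q (q * x) c =
      (1 - x) * x⁻¹ * (w c * (x ^ c / qPoch q x (c + 1))) := fun c ↦ by
    have h1x : 1 - x ≠ 0 := by simpa using one_sub_mul_pow_ne_zero hq.le hx 0
    rw [zpow_three_mul_sub_one hxne, qPoch_succ', hw_def]
    field_simp
  simp only [hrow, qPoch_succ' q x, mul_left_comm _ (1 - x)]
  simp only [hcol, tsum_mul_left]
  refine ⟨(hu.mul_tendsto_const hlim).mul_left _,
    (hasSum_mul_pow_div_qPoch hq hx hw).summable.mul_left _,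
    hu.mul_tendsto_const (hlim.sub_const _), ?_⟩
  rw [tsum_pow_mul_qBinomTransform_succ_mul_qPoch hq hxne hx hw, show w 0 = 1 by simp [hw_def]]
  ring
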